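/- arXiv:2506.20568 — 2 statements merged into one kernel-verified Lean document; each statement's English description precedes it below -/
import Mathlib

section
/- The semistable cone of d equals {θ in the orthogonal complement of d : θ(e) ≤ 0 for all generic subdimension vectors e of d}. -/
open scoped BigOperators

/-- A representation of a quiver with vertex set `Q0` and arrow set `Q1`
(with source and target maps `s t : Q1 → Q0`) over a field `k`:
a finite-dimensional `k`-vector space at each vertex and a linear map for each arrow. -/
structure QRep (k : Type) [Field k] {Q0 Q1 : Type} (s t : Q1 → Q0) where
  V : Q0 → Type
  [addgrp : ∀ i, AddCommGroup (V i)]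
  [mod : ∀ i, Module k (V i)]
  [fd : ∀ i, FiniteDimensional k (V i)]
  hom : ∀ a : Q1, V (s a) →ₗ[k] V (t a)

attribute [instance] QRep.addgrp QRep.mod QRep.fd

namespace QRep

variable {k : Type} [Field k] {Q0 Q1 : Type} {s t : Q1 → Q0}

/-- The dimension vector of a representation. -/
noncomputable def dimVec (M : QRep k s t) : Q0 → ℕ := fun i => Module.finrank k (M.V i)

/-- A family of subspaces is a subrepresentation if it is invariant under all arrow maps. -/
def IsSubrep (M : QRep k s t) (U : ∀ i, Submodule k (M.V i)) : Prop :=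
  ∀ a : Q1, ∀ x ∈ U (s a), M.hom a x ∈ U (t a)

/-- The dimension vector of a family of subspaces. -/
noncomputable def subDim (M : QRep k s t) (U : ∀ i, Submodule k (M.V i)) : Q0 → ℕ :=
  fun i => Module.finrank k (U i)

/-- The subrepresentation determined by an invariant family of subspaces. -/
def subRep (M : QRep k s t) (U : ∀ i, Submodule k (M.V i)) (h : M.IsSubrep U) :
    QRep k s t where
  V := fun i => U i
  hom := fun a => (M.hom a).restrict (fun x hx => h a x hx)

/-- The quotient representation by an invariant family of subspaces. -/
def quotRep (M : QRep k s t) (U : ∀ i, Submodule k (M.V i)) (h : M.IsSubrep U) :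
    QRep k s t where
  V := fun i => M.V i ⧸ U i
  hom := fun a => (U (s a)).mapQ (U (t a)) (M.hom a) (fun x hx => h a x hx)

/-- Direct sum of two representations. -/
def dsum (M N : QRep k s t) : QRep k s t where
  V := fun i => M.V i × N.V i
  hom := fun a => (M.hom a).prodMap (N.hom a)

variable [Fintype Q0]

/-- The pairing `θ(d) = θ · d` of a stability parameter with a dimension vector. -/
def pair (θ : Q0 → ℝ) (d : Q0 → ℕ) : ℝ := ∑ i, θ i * (d i : ℝ)

/-- `θ`-semistability: `θ(M) = 0` and `θ(M') ≤ 0` for all subrepresentations. -/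
def Semistable (θ : Q0 → ℝ) (M : QRep k s t) : Prop :=
  pair θ M.dimVec = 0 ∧
    ∀ U : ∀ i, Submodule k (M.V i), M.IsSubrep U → pair θ (M.subDim U) ≤ 0

/-- `θ`-stability: `θ(M) = 0` and `θ(M') < 0` for all proper nonzero subrepresentations. -/
def Stable (θ : Q0 → ℝ) (M : QRep k s t) : Prop :=
  pair θ M.dimVec = 0 ∧
    ∀ U : ∀ i, Submodule k (M.V i), M.IsSubrep U →
      U ≠ (fun _ => ⊥) → U ≠ (fun _ => ⊤) → pair θ (M.subDim U) < 0

end QRep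

section Defs

variable (k : Type) [Field k] {Q0 Q1 : Type} (s t : Q1 → Q0)

/-- `e` is a generic subdimension vector of `d` (Schofield's characterization as definition):
every representation of dimension vector `d` admits a subrepresentation of dimension vector `e`. -/
def GenericSub (e d : Q0 → ℕ) : Prop :=
  e ≤ d ∧ ∀ M : QRep k s t, M.dimVec = d →
    ∃ U : ∀ i, Submodule k (M.V i), M.IsSubrep U ∧ M.subDim U = e

variable [Fintype Q0]

/-- The semistable cone of `d`: stability parameters orthogonal to `d` admitting a
semistable representation of dimension vector `d`. -/
def SstCone (d : Q0 → ℕ) : Set (Q0 → ℝ) :=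
  {θ | QRep.pair θ d = 0 ∧ ∃ M : QRep k s t, M.dimVec = d ∧ QRep.Semistable θ M}

/-- The wall `W_e`: parameters `θ` orthogonal to `d` and `e` such that some `θ`-semistable
representation of dimension vector `d` has a subrepresentation of dimension vector `e`. -/
def Wall (d e : Q0 → ℕ) : Set (Q0 → ℝ) :=
  {θ | QRep.pair θ d = 0 ∧ QRep.pair θ e = 0 ∧
    ∃ (M : QRep k s t) (U : ∀ i, Submodule k (M.V i)),
      M.dimVec = d ∧ M.IsSubrep U ∧ M.subDim U = e ∧ QRep.Semistable θ M}

/-- GIT equivalence of stability parameters: equal semistable loci. -/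
def GITEquiv (d : Q0 → ℕ) (θ η : Q0 → ℝ) : Prop :=
  ∀ M : QRep k s t, M.dimVec = d → (QRep.Semistable θ M ↔ QRep.Semistable η M)

end Defs

/-- The hyperplane `H_e` inside the stability space of `d`. -/
def Hset {Q0 : Type} [Fintype Q0] (d e : Q0 → ℕ) : Set (Q0 → ℝ) :=
  {θ | QRep.pair θ d = 0 ∧ QRep.pair θ e = 0}

section Euler

variable {Q0 Q1 : Type} [Fintype Q0] [Fintype Q1]

/-- The Euler form of the quiver. -/
def euler (s t : Q1 → Q0) (x y : Q0 → ℤ) : ℤ :=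
  (∑ i, x i * y i) - ∑ a, x (s a) * y (t a)

/-- `ext(d, e)`: the maximum of `−⟨d', e⟩` over generic subdimension vectors `d' ↪ d`. -/
noncomputable def extGen (k : Type) [Field k] (s t : Q1 → Q0) (d e : Q0 → ℕ) : ℤ :=
  sSup {z : ℤ | ∃ d' : Q0 → ℕ, GenericSub k s t d' d ∧
    z = -(euler s t (fun i => (d' i : ℤ)) (fun i => (e i : ℤ)))}

end Euler

section Schur

variable {Q0 Q1 : Type} (s t : Q1 → Q0)

/-- Coordinates on the representation space `Rep(Q, d)`. -/
def RepCoords (d : Q0 → ℕ) : Type := Σ a : Q1, Fin (d (t a)) × Fin (d (s a))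

/-- The representation associated to a point of the representation space. -/
def matToRep (k : Type) [Field k] (d : Q0 → ℕ)
    (m : ∀ a : Q1, Matrix (Fin (d (t a))) (Fin (d (s a))) k) : QRep k s t where
  V := fun i => Fin (d i) → k
  hom := fun a => Matrix.mulVecLin (m a)

/-- A nonzero representation is indecomposable if it is not a direct sum of two nonzero
subrepresentations. -/
def Indecomposable (k : Type) [Field k] (M : QRep k s t) : Prop :=
  (∃ i, Module.finrank k (M.V i) ≠ 0) ∧
    ¬ ∃ U W : ∀ i, Submodule k (M.V i), M.IsSubrep U ∧ M.IsSubrep W ∧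
        U ≠ (fun _ => ⊥) ∧ W ≠ (fun _ => ⊥) ∧ ∀ i, IsCompl (U i) (W i)

/-- `d` is a Schur root: a general representation of dimension vector `d` is indecomposable,
i.e. all representations outside the vanishing locus of some nonzero polynomial on the
representation space are indecomposable. -/
def IsSchurRoot (k : Type) [Field k] (d : Q0 → ℕ) : Prop :=
  ∃ p : MvPolynomial (RepCoords s t d) k, p ≠ 0 ∧
    ∀ m : ∀ a : Q1, Matrix (Fin (d (t a))) (Fin (d (s a))) k,
      MvPolynomial.eval (fun x => m x.1 x.2.1 x.2.2) p ≠ 0 →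
        Indecomposable s t k (matToRep s t k d m)

end Schur

/-!
Encode a subrepresentation of a matrix representation by matrices whose columns form bases of the
subspaces, together with left inverses. This notion makes sense over every commutative ring, and
the locus of representations with a subrepresentation of dimension vector `e` is Zariski closed,
by a valuative argument. If a point `p` lies in the closure of the locus `X`, then the tautological
subrepresentation over the ring of all functions `X → k` gives one over the fraction field `K` of a
valuation ring `V` centred at `p`. Grassmannians being proper, it extends to `V`; its reduction is a
subrepresentation of `p` over the residue field of `V`, and the Nullstellensatz brings it down
to `k`.

Affine space is irreducible, so the loci of the finitely many non-generic `e ≤ d` do not cover it. A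
representation outside all of them has only subrepresentations of generic dimension vector, and
is therefore `θ`-semistable as soon as `θ` is nonpositive on the generic subdimension vectors.
-/

section Minors

variable {R : Type*} [CommRing R] {n r : Type*} [Fintype r] [DecidableEq r]

theorem det_mul_eq_sum_submatrix [Fintype n] (L : Matrix r n R) (B : Matrix n r R) :
    (L * B).det = ∑ J : r → n, (∏ j, L j (J j)) * (B.submatrix J id).det := by
  classical
  have rows : L * B = fun j => ∑ x, L j x • B x := by
    ext j c
    simp only [Matrix.mul_apply, Finset.sum_apply, Pi.smul_apply, smul_eq_mul]
  calc (L * B).det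
      = Matrix.detRowAlternating.toMultilinearMap fun j => ∑ x, L j x • B x := by rw [rows]; rfl
    _ = ∑ J : r → n, Matrix.detRowAlternating.toMultilinearMap fun j => L j (J j) • B (J j) :=
        MultilinearMap.map_sum _ _
    _ = ∑ J : r → n, (∏ j, L j (J j)) * (B.submatrix J id).det :=
        Finset.sum_congr rfl fun J _ => MultilinearMap.map_smul_univ _ _ _

theorem exists_det_submatrix_ne_zero [Nontrivial R] [Fintype n] {L : Matrix r n R}
    {B : Matrix n r R} (h : L * B = 1) : ∃ J : r → n, (B.submatrix J id).det ≠ 0 := by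
  by_contra! hzero
  have hdet := det_mul_eq_sum_submatrix L B
  simp only [h, Matrix.det_one, hzero, mul_zero, Finset.sum_const_zero] at hdet
  exact one_ne_zero hdet

theorem det_submatrix_update_of_submatrix_eq_one {C : Matrix n r R} {J : r → n}
    (h : C.submatrix J id = 1) (x : n) (j : r) :
    (C.submatrix (Function.update J j x) id).det = C x j := by
  have hrow : C.submatrix (Function.update J j x) id = (1 : Matrix r r R).updateRow j (C x) := by
    ext p q
    rcases eq_or_ne p j with rfl | hp
    · simp
    · simp [← h, hp]
  rw [hrow, ← Matrix.cramer_transpose_apply, Matrix.transpose_one, Matrix.cramer_one]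
  rfl

variable {K : Type*} [Field K] [Fintype n]

-- For a minor of maximal valuation, the entries are quotients of minors by it (Cramer).
theorem exists_mul_inv_submatrix_mem_valuationSubring (V : ValuationSubring K)
    {L : Matrix r n K} {B : Matrix n r K} (h : L * B = 1) :
    ∃ J : r → n, IsUnit (B.submatrix J id) ∧ ∀ x j, (B * (B.submatrix J id)⁻¹) x j ∈ V := by
  obtain ⟨J₀, hJ₀⟩ := exists_det_submatrix_ne_zero h
  have : Nonempty (r → n) := ⟨J₀⟩
  classical
  obtain ⟨J, hmax⟩ := Finite.exists_max fun J : r → n => V.valuation (B.submatrix J id).det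
  have hval : 0 < V.valuation (B.submatrix J id).det :=
    (zero_lt_iff.2 ((map_ne_zero _).2 hJ₀)).trans_le (hmax J₀)
  set A := B.submatrix J id
  have hdet : IsUnit A.det := ((map_ne_zero _).1 hval.ne').isUnit
  refine ⟨J, A.isUnit_iff_isUnit_det.2 hdet, fun x j => ?_⟩
  set C := B * A⁻¹
  have hBC : B = C * A := (Matrix.nonsing_inv_mul_cancel_right _ _ hdet).symm
  have hCJ : C.submatrix J id = 1 := Matrix.mul_nonsing_inv A hdet
  have hminor : (B.submatrix (Function.update J j x) id).det = C x j * A.det := by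
    rw [← det_submatrix_update_of_submatrix_eq_one hCJ, ← Matrix.det_mul, hBC]
    rfl
  have hle := hmax (Function.update J j x)
  rw [hminor, map_mul] at hle
  exact (V.valuation_le_one_iff _).1 (le_of_mul_le_mul_right (by rwa [one_mul]) hval)

theorem exists_leftInverse_map_eq_mul_unit (V : ValuationSubring K)
    {L : Matrix r n K} {B : Matrix n r K} (h : L * B = 1) :
    ∃ (g : (Matrix r r K)ˣ) (L₀ : Matrix r n V) (B₀ : Matrix n r V),
      L₀ * B₀ = 1 ∧ B₀.map V.subtype = B * g.val := by
  classical
  obtain ⟨J, ⟨A, hA⟩, hmem⟩ := exists_mul_inv_submatrix_mem_valuationSubring V h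
  rw [← hA, ← Matrix.coe_units_inv] at hmem
  let B₀ : Matrix n r V := Matrix.of fun x j => ⟨_, hmem x j⟩
  have hB₀ : B₀.map V.subtype = B * A⁻¹.val := rfl
  refine ⟨A⁻¹, (1 : Matrix n n V).submatrix J id, B₀, ?_, hB₀⟩
  apply Matrix.map_injective V.subtype_injective
  calc ((1 : Matrix n n V).submatrix J id * B₀).map V.subtype
      = (B₀.map V.subtype).submatrix J id := by
        rw [← Equiv.coe_refl, Matrix.one_submatrix_mul]; rfl
    _ = A.val * A⁻¹.val := by rw [hB₀, hA]; rfl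
    _ = (1 : Matrix r r V).map V.subtype := by
        rw [Units.mul_inv, Matrix.map_one _ (map_zero _) (map_one _)]

end Minors

section Specialization

universe u v

theorem nonempty_algHom_of_finiteType (k A : Type*) [Field k] [IsAlgClosed k] [CommRing A]
    [Nontrivial A] [Algebra k A] [Algebra.FiniteType k A] : Nonempty (A →ₐ[k] k) := by
  obtain ⟨P, hP⟩ := Ideal.exists_maximal A
  let _ : Field (A ⧸ P) := Ideal.Quotient.field P
  have : Module.Finite k (A ⧸ P) := finite_of_finite_type_of_isJacobsonRing k (A ⧸ P)
  let ψ : k ≃ₐ[k] A ⧸ P :=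
    AlgEquiv.ofBijective (Algebra.ofId k _) IsAlgClosed.algebraMap_bijective_of_isIntegral
  exact ⟨ψ.symm.toAlgHom.comp (Ideal.Quotient.mkₐ k P)⟩

theorem exists_ringHom_field_ker_comp_le {P : Type*} {R : Type u} [CommRing P] [CommRing R]
    (φ : P →+* R) (p : Ideal P) [p.IsPrime] (h : RingHom.ker φ ≤ p) :
    ∃ (K : Type u) (_ : Field K) (ψ : R →+* K), RingHom.ker (ψ.comp φ) ≤ p := by
  have hdisj : Disjoint ((⊥ : Ideal R) : Set R) (p.primeCompl.map φ) := by
    rw [Set.disjoint_left]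
    rintro _ h0 ⟨f, hf, rfl⟩
    exact hf (h h0)
  obtain ⟨q, hq, -, hqp⟩ := Ideal.exists_le_prime_disjoint _ _ hdisj
  refine ⟨q.ResidueField, inferInstance, algebraMap R _, fun f hf => ?_⟩
  by_contra hfp
  exact Set.disjoint_left.1 hqp (Ideal.algebraMap_residueField_eq_zero.1 hf) ⟨f, hfp, rfl⟩

theorem exists_valuationSubring_comap_maximalIdeal_eq {P K : Type*} [CommRing P] [Field K]
    (f : P →+* K) (p : Ideal P) [p.IsPrime] (h : RingHom.ker f ≤ p) :
    ∃ (V : ValuationSubring K) (σ : P →+* V),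
      V.subtype.comp σ = f ∧ (IsLocalRing.maximalIdeal V).comap σ = p := by
  have hunit (y : p.primeCompl) : IsUnit (f y) := IsUnit.mk0 _ fun h0 => y.2 (h h0)
  let χ : Localization.AtPrime p →+* K := IsLocalization.lift hunit
  obtain ⟨V, hV, hlocal⟩ := IsLocalRing.exists_factor_valuationRing χ
  let τ : Localization.AtPrime p →+* V := χ.codRestrict V.toSubring hV
  have hτ : (IsLocalRing.maximalIdeal V).comap τ = IsLocalRing.maximalIdeal _ :=
    ((IsLocalRing.local_hom_TFAE τ).out 0 4).1 hlocal
  refine ⟨V, τ.comp (algebraMap P _), IsLocalization.lift_comp hunit, ?_⟩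
  rw [← Ideal.comap_comap, hτ]
  exact IsLocalization.AtPrime.under_maximalIdeal (Localization.AtPrime p) p

theorem exists_valuationSubring_of_mem_zeroLocus_vanishingIdeal {k : Type u} {τ : Type v} [Field k]
    {X : Set (τ → k)} {p : τ → k}
    (hp : p ∈ MvPolynomial.zeroLocus k (MvPolynomial.vanishingIdeal k X)) :
    ∃ (K : Type max u v) (_ : Field K) (ψ : (X → k) →+* K) (V : ValuationSubring K)
      (σ : MvPolynomial τ k →+* V),
      V.subtype.comp σ = ψ.comp (RingHom.pi fun x : X => MvPolynomial.eval x.1) ∧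
      (IsLocalRing.maximalIdeal V).comap σ = RingHom.ker (MvPolynomial.eval p) := by
  let φ : MvPolynomial τ k →+* (X → k) := RingHom.pi fun x => MvPolynomial.eval x.1
  have hker : RingHom.ker φ ≤ RingHom.ker (MvPolynomial.eval p) := by
    intro f hf
    rw [RingHom.mem_ker, ← MvPolynomial.aeval_eq_eval]
    refine hp f fun x hx => ?_
    rw [MvPolynomial.aeval_eq_eval]
    exact congrFun hf ⟨x, hx⟩
  have := RingHom.ker_isPrime (MvPolynomial.eval p)
  obtain ⟨K, _, ψ, hψ⟩ := exists_ringHom_field_ker_comp_le φ _ hker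
  obtain ⟨V, σ, hσ, hcenter⟩ := exists_valuationSubring_comap_maximalIdeal_eq (ψ.comp φ) _ hψ
  exact ⟨K, _, ψ, V, σ, hσ, hcenter⟩

theorem exists_forall_notMem_of_zeroLocus_vanishingIdeal {k σ ι : Type*} [Field k] [Infinite k]
    (T : Finset ι) (X : ι → Set (σ → k))
    (hclosed : ∀ i ∈ T, MvPolynomial.zeroLocus k (MvPolynomial.vanishingIdeal k (X i)) ⊆ X i)
    (hne : ∀ i ∈ T, X i ≠ Set.univ) : ∃ x, ∀ i ∈ T, x ∉ X i := by
  have hf (i : T) : ∃ f ∈ MvPolynomial.vanishingIdeal k (X i), f ≠ 0 := by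
    obtain ⟨x, hx⟩ := (Set.ne_univ_iff_exists_notMem _).1 (hne i i.2)
    by_contra! hzero
    refine hx (hclosed i i.2 fun f hf => ?_)
    rw [hzero f hf, map_zero]
  choose f hf hf0 using hf
  have hprod : ∏ i, f i ≠ 0 := Finset.prod_ne_zero_iff.2 fun i _ => hf0 i
  obtain ⟨x, hx⟩ : ∃ x, MvPolynomial.eval x (∏ i, f i) ≠ 0 := by
    contrapose! hprod
    exact MvPolynomial.funext fun x => by rw [hprod, map_zero]
  refine ⟨x, fun i hi hmem => ?_⟩
  rw [map_prod, Finset.prod_ne_zero_iff] at hx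
  refine hx ⟨i, hi⟩ (Finset.mem_univ _) ?_
  rw [← MvPolynomial.aeval_eq_eval]
  exact hf ⟨i, hi⟩ x hmem

end Specialization

section SplitSubrep

variable {Q0 Q1 : Type*} {s t : Q1 → Q0} {d e : Q0 → ℕ}

/-- The matrix representation `m` over the commutative ring `R` has a subrepresentation of rank
vector `e` which is a free direct summand at each vertex. The summand at `i` is encoded by a matrix
`B i`, whose columns are a basis of it, and a left inverse `L i`, so that `B i * L i` is a
projection onto it. Over a field these are all subrepresentations, and in general they can be
transported along ring homomorphisms. -/
def HasSplitSubrep {R : Type*} [CommRing R] (e : Q0 → ℕ)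
    (m : ∀ a : Q1, Matrix (Fin (d (t a))) (Fin (d (s a))) R) : Prop :=
  ∃ (B : ∀ i, Matrix (Fin (d i)) (Fin (e i)) R) (L : ∀ i, Matrix (Fin (e i)) (Fin (d i)) R),
    (∀ i, L i * B i = 1) ∧ ∀ a, ∃ C : Matrix (Fin (e (t a))) (Fin (e (s a))) R,
    m a * B (s a) = B (t a) * C

theorem HasSplitSubrep.map {R R' : Type*} [CommRing R] [CommRing R'] (φ : R →+* R')
    {m : ∀ a : Q1, Matrix (Fin (d (t a))) (Fin (d (s a))) R} (h : HasSplitSubrep e m) :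
    HasSplitSubrep e fun a => (m a).map φ := by
  obtain ⟨B, L, hLB, hB⟩ := h
  refine ⟨fun i => (B i).map φ, fun i => (L i).map φ, fun i => ?_, fun a => ?_⟩
  · rw [← Matrix.map_mul, hLB, Matrix.map_one _ (map_zero φ) (map_one φ)]
  · obtain ⟨C, hC⟩ := hB a
    exact ⟨C.map φ, by rw [← Matrix.map_mul, hC, Matrix.map_mul]⟩

theorem HasSplitSubrep.pi {X : Type*} {R : X → Type*} [∀ x, CommRing (R x)]
    {m : ∀ a : Q1, Matrix (Fin (d (t a))) (Fin (d (s a))) (∀ x, R x)}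
    (h : ∀ x, HasSplitSubrep e fun a => (m a).map (Pi.evalRingHom R x)) : HasSplitSubrep e m := by
  choose B L hLB C hC using h
  refine ⟨fun i => Matrix.of fun p q x => B x i p q, fun i => Matrix.of fun p q x => L x i p q,
    fun i => ?_, fun a => ⟨Matrix.of fun p q x => C x a p q, ?_⟩⟩
  · ext p q x
    simpa [Matrix.mul_apply, Matrix.one_apply, apply_ite (fun f : ∀ x, R x => f x)]
      using congrFun₂ (hLB x i) p q
  · ext p q x
    simpa [Matrix.mul_apply] using congrFun₂ (hC x a) p q

-- The matrix `C` expressing invariance over `R'` is necessarily `L * m * B`, which is defined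
-- over `R`.
theorem HasSplitSubrep.of_map_injective {R R' : Type*} [CommRing R] [CommRing R'] {ι : R →+* R'}
    (hι : Function.Injective ι) {m : ∀ a : Q1, Matrix (Fin (d (t a))) (Fin (d (s a))) R}
    {B : ∀ i, Matrix (Fin (d i)) (Fin (e i)) R} {L : ∀ i, Matrix (Fin (e i)) (Fin (d i)) R}
    (hLB : ∀ i, L i * B i = 1)
    (hB : ∀ a, ∃ C : Matrix (Fin (e (t a))) (Fin (e (s a))) R',
      (m a).map ι * (B (s a)).map ι = (B (t a)).map ι * C) :
    HasSplitSubrep e m := by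
  refine ⟨B, L, hLB, fun a => ⟨L (t a) * (m a * B (s a)), ?_⟩⟩
  obtain ⟨C, hC⟩ := hB a
  have hLB' : (L (t a)).map ι * (B (t a)).map ι = 1 := by
    rw [← Matrix.map_mul, hLB, Matrix.map_one _ (map_zero ι) (map_one ι)]
  apply Matrix.map_injective hι
  calc (m a * B (s a)).map ι
      = (B (t a)).map ι * C := by rw [Matrix.map_mul, hC]
    _ = (B (t a)).map ι * ((L (t a)).map ι * ((B (t a)).map ι * C)) := by
        rw [← Matrix.mul_assoc ((L (t a)).map ι), hLB', Matrix.one_mul]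
    _ = (B (t a) * (L (t a) * (m a * B (s a)))).map ι := by
        simp only [Matrix.map_mul, hC]

theorem HasSplitSubrep.of_valuationSubring {K : Type*} [Field K] (V : ValuationSubring K)
    {m : ∀ a : Q1, Matrix (Fin (d (t a))) (Fin (d (s a))) V}
    (h : HasSplitSubrep e fun a => (m a).map V.subtype) : HasSplitSubrep e m := by
  obtain ⟨B, L, hLB, hB⟩ := h
  choose g L₀ B₀ hLB₀ hB₀ using fun i => exists_leftInverse_map_eq_mul_unit V (hLB i)
  refine HasSplitSubrep.of_map_injective V.subtype_injective hLB₀ fun a => ?_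
  obtain ⟨C, hC⟩ := hB a
  refine ⟨(g (t a))⁻¹.val * (C * (g (s a)).val), ?_⟩
  calc (m a).map V.subtype * (B₀ (s a)).map V.subtype
      = B (t a) * (C * (g (s a)).val) := by rw [hB₀, ← Matrix.mul_assoc, hC, Matrix.mul_assoc]
    _ = (B₀ (t a)).map V.subtype * ((g (t a))⁻¹.val * (C * (g (s a)).val)) := by
        rw [hB₀, Matrix.mul_assoc, ← Matrix.mul_assoc (g (t a)).val, Units.mul_inv, Matrix.one_mul]

theorem HasSplitSubrep.of_map_algebraMap {k R : Type*} [Field k] [IsAlgClosed k] [CommRing R]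
    [Nontrivial R] [Algebra k R] [Finite Q0]
    {m : ∀ a : Q1, Matrix (Fin (d (t a))) (Fin (d (s a))) k}
    (h : HasSplitSubrep e fun a => (m a).map (algebraMap k R)) : HasSplitSubrep e m := by
  obtain ⟨B, L, hLB, hB⟩ := h
  let entriesB : Set R := Set.range fun c : Σ i, Fin (d i) × Fin (e i) => B c.1 c.2.1 c.2.2
  let entriesL : Set R := Set.range fun c : Σ i, Fin (e i) × Fin (d i) => L c.1 c.2.1 c.2.2
  let A : Subalgebra k R := Algebra.adjoin k (entriesB ∪ entriesL)
  have : Algebra.FiniteType k A := A.fg_iff_finiteType.1 <|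
    Subalgebra.fg_def.2 ⟨_, (Set.finite_range _).union (Set.finite_range _), rfl⟩
  let B₀ i : Matrix (Fin (d i)) (Fin (e i)) A := Matrix.of fun p q =>
    ⟨B i p q, Algebra.subset_adjoin (Or.inl ⟨⟨i, p, q⟩, rfl⟩)⟩
  let L₀ i : Matrix (Fin (e i)) (Fin (d i)) A := Matrix.of fun p q =>
    ⟨L i p q, Algebra.subset_adjoin (Or.inr ⟨⟨i, p, q⟩, rfl⟩)⟩
  have hinj : Function.Injective (A.val : A →+* R) := Subtype.val_injective
  have hLB₀ (i) : L₀ i * B₀ i = 1 := by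
    apply Matrix.map_injective hinj
    calc (L₀ i * B₀ i).map (A.val : A →+* R)
        = L i * B i := Matrix.map_mul
      _ = (1 : Matrix _ _ A).map (A.val : A →+* R) := by
          rw [hLB, Matrix.map_one _ (map_zero _) (map_one _)]
  have hA : HasSplitSubrep e fun a => (m a).map (algebraMap k A) :=
    HasSplitSubrep.of_map_injective hinj hLB₀ hB
  obtain ⟨ψ⟩ := nonempty_algHom_of_finiteType k A
  simpa [Matrix.map_map, Function.comp_def] using hA.map (ψ : A →+* k)

end SplitSubrep

section Closedness

variable {Q0 Q1 : Type} {s t : Q1 → Q0} {d : Q0 → ℕ}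

/-- The arrow matrices of the representation with coordinates `x` in the representation space. The
coordinates may lie in any `R`; this includes the tautological family over a space of
representations, whose coordinates are functions. -/
def coordMatrix {R : Type*} (x : RepCoords s t d → R) (a : Q1) :
    Matrix (Fin (d (t a))) (Fin (d (s a))) R :=
  Matrix.of fun p q => x ⟨a, p, q⟩

theorem zeroLocus_vanishingIdeal_hasSplitSubrep_subset {k : Type*} [Field k] [IsAlgClosed k]
    [Finite Q0] (e : Q0 → ℕ) :
    MvPolynomial.zeroLocus k (MvPolynomial.vanishingIdeal k
      {x : RepCoords s t d → k | HasSplitSubrep e (coordMatrix x)}) ⊆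
      {x | HasSplitSubrep e (coordMatrix x)} := by
  intro p hp
  set X := {x : RepCoords s t d → k | HasSplitSubrep e (coordMatrix x)}
  obtain ⟨K, _, ψ, V, σ, hσ, hcenter⟩ :=
    exists_valuationSubring_of_mem_zeroLocus_vanishingIdeal hp
  have htaut : HasSplitSubrep e (coordMatrix fun c (x : X) => x.1 c) := .pi fun x => x.2
  have hV : HasSplitSubrep e (coordMatrix fun c => σ (MvPolynomial.X c)) := by
    refine .of_valuationSubring V ?_
    convert! htaut.map ψ with a
    ext i j
    exact (RingHom.congr_fun hσ _).trans (congrArg ψ (funext fun x => MvPolynomial.eval_X _))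
  let ρ := (IsLocalRing.residue V).comp σ
  have hρ (c) : ρ (MvPolynomial.C (p c)) = ρ (MvPolynomial.X c) := by
    have hmem : MvPolynomial.C (p c) - MvPolynomial.X c ∈ RingHom.ker (MvPolynomial.eval p) := by
      simp [RingHom.mem_ker]
    rw [← hcenter, Ideal.mem_comap, map_sub] at hmem
    exact Ideal.Quotient.eq.2 hmem
  let _ : Algebra k (IsLocalRing.ResidueField V) := (ρ.comp MvPolynomial.C).toAlgebra
  refine HasSplitSubrep.of_map_algebraMap (R := IsLocalRing.ResidueField V) ?_
  convert! hV.map (IsLocalRing.residue V) with a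
  ext i j
  exact hρ _

end Closedness

section Generic

open scoped Matrix

variable {k : Type} [Field k] {Q0 Q1 : Type} {s t : Q1 → Q0} {d : Q0 → ℕ}

theorem dimVec_matToRep (m : ∀ a : Q1, Matrix (Fin (d (t a))) (Fin (d (s a))) k) :
    (matToRep s t k d m).dimVec = d :=
  funext fun _ => Module.finrank_fin_fun k

theorem HasSplitSubrep.exists_isSubrep {e : Q0 → ℕ}
    {m : ∀ a : Q1, Matrix (Fin (d (t a))) (Fin (d (s a))) k} (h : HasSplitSubrep e m) :
    ∃ U, (matToRep s t k d m).IsSubrep U ∧ (matToRep s t k d m).subDim U = e := by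
  obtain ⟨B, L, hLB, hB⟩ := h
  refine ⟨fun i => LinearMap.range (B i).mulVecLin, ?_, ?_⟩
  · rintro a _ ⟨y, rfl⟩
    obtain ⟨C, hC⟩ := hB a
    refine ⟨C.mulVecLin y, ?_⟩
    change B (t a) *ᵥ (C *ᵥ y) = m a *ᵥ (B (s a) *ᵥ y)
    rw [Matrix.mulVec_mulVec, ← hC, Matrix.mulVec_mulVec]
  · funext i
    have hinj : Function.Injective (B i).mulVecLin :=
      Function.LeftInverse.injective (g := (L i).mulVecLin) fun y => by
        simp [hLB]
    exact (LinearMap.finrank_range_of_inj hinj).trans (Module.finrank_fin_fun k)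

theorem QRep.IsSubrep.hasSplitSubrep
    {m : ∀ a : Q1, Matrix (Fin (d (t a))) (Fin (d (s a))) k}
    {U : ∀ i, Submodule k ((matToRep s t k d m).V i)} (hU : (matToRep s t k d m).IsSubrep U) :
    HasSplitSubrep ((matToRep s t k d m).subDim U) m := by
  let M := matToRep s t k d m
  let b (i) : (Fin (M.subDim U i) → k) ≃ₗ[k] U i := (Module.finBasis k (U i)).equivFun.symm
  let ι (i) : (Fin (M.subDim U i) → k) →ₗ[k] (Fin (d i) → k) :=
    (U i).subtype ∘ₗ (b i).toLinearMap
  have hι (i) : LinearMap.ker (ι i) = ⊥ :=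
    LinearMap.ker_eq_bot.2 ((U i).injective_subtype.comp (b i).injective)
  choose l hl using fun i => LinearMap.exists_leftInverse_of_injective (ι i) (hι i)
  let c (a) : (Fin (M.subDim U (s a)) → k) →ₗ[k] (Fin (M.subDim U (t a)) → k) :=
    (b (t a)).symm.toLinearMap ∘ₗ (M.hom a).restrict (hU a) ∘ₗ (b (s a)).toLinearMap
  have hc (a) : (m a).toLin' ∘ₗ ι (s a) = ι (t a) ∘ₗ c a := by
    refine LinearMap.ext fun y => ?_
    have hb : b (t a) (c a y) = (M.hom a).restrict (hU a) (b (s a) y) :=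
      (b (t a)).apply_symm_apply _
    exact congrArg Subtype.val hb.symm
  refine ⟨fun i => LinearMap.toMatrix' (ι i), fun i => LinearMap.toMatrix' (l i),
    fun i => ?_, fun a => ⟨LinearMap.toMatrix' (c a), ?_⟩⟩
  · rw [← LinearMap.toMatrix'_comp, hl, LinearMap.toMatrix'_id]
  · rw [← LinearMap.toMatrix'_comp, ← hc, LinearMap.toMatrix'_comp, LinearMap.toMatrix'_toLin']

theorem exists_linearEquiv_matToRep (M : QRep k s t) (hM : M.dimVec = d) :
    ∃ (x : RepCoords s t d → k) (φ : ∀ i, M.V i ≃ₗ[k] (matToRep s t k d (coordMatrix x)).V i),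
      ∀ a v, φ (t a) (M.hom a v) = (matToRep s t k d (coordMatrix x)).hom a (φ (s a) v) := by
  have hrank (i) : Module.finrank k (M.V i) = Module.finrank k (Fin (d i) → k) :=
    (congrFun hM i).trans (Module.finrank_fin_fun k).symm
  let φ (i) : M.V i ≃ₗ[k] (Fin (d i) → k) := LinearEquiv.ofFinrankEq _ _ (hrank i)
  let m (a) : Matrix (Fin (d (t a))) (Fin (d (s a))) k :=
    LinearMap.toMatrix' ((φ (t a)).toLinearMap ∘ₗ M.hom a ∘ₗ (φ (s a)).symm.toLinearMap)
  refine ⟨fun c => m c.1 c.2.1 c.2.2, φ, fun a v => ?_⟩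
  change _ = m a *ᵥ φ (s a) v
  rw [← Matrix.toLin'_apply, Matrix.toLin'_toMatrix']
  exact congrArg (φ (t a) ∘ M.hom a) ((φ (s a)).symm_apply_apply v).symm

theorem QRep.IsSubrep.exists_of_linearEquiv {M N : QRep k s t} (φ : ∀ i, M.V i ≃ₗ[k] N.V i)
    (hφ : ∀ a v, φ (t a) (M.hom a v) = N.hom a (φ (s a) v)) {U : ∀ i, Submodule k (N.V i)}
    (hU : N.IsSubrep U) : ∃ W, M.IsSubrep W ∧ M.subDim W = N.subDim U := by
  refine ⟨fun i => (U i).comap (φ i).toLinearMap, fun a v hv => ?_, funext fun i => ?_⟩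
  · change φ (t a) (M.hom a v) ∈ U (t a)
    rw [hφ]
    exact hU a _ hv
  · exact ((φ i).ofSubmodule' (U i)).finrank_eq

theorem genericSub_iff_forall_hasSplitSubrep {e : Q0 → ℕ} :
    GenericSub k s t e d ↔
      e ≤ d ∧ ∀ x : RepCoords s t d → k, HasSplitSubrep e (coordMatrix x) := by
  refine and_congr_right fun _ => ⟨fun h x => ?_, fun h M hM => ?_⟩
  · obtain ⟨U, hU, rfl⟩ := h _ (dimVec_matToRep (coordMatrix x))
    exact hU.hasSplitSubrep
  · obtain ⟨x, φ, hφ⟩ := exists_linearEquiv_matToRep M hM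
    obtain ⟨U, hU, rfl⟩ := (h x).exists_isSubrep
    exact hU.exists_of_linearEquiv φ hφ

theorem exists_forall_isSubrep_genericSub (k : Type) [Field k] [IsAlgClosed k] [Finite Q0]
    (s t : Q1 → Q0) (d : Q0 → ℕ) :
    ∃ M : QRep k s t, M.dimVec = d ∧ ∀ U, M.IsSubrep U → GenericSub k s t (M.subDim U) d := by
  have := Fintype.ofFinite Q0
  classical
  have hfin : {e : Q0 → ℕ | e ≤ d ∧ ¬ GenericSub k s t e d}.Finite :=
    (Set.finite_Iic d).subset fun e he => he.1
  obtain ⟨x, hx⟩ := exists_forall_notMem_of_zeroLocus_vanishingIdeal hfin.toFinset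
    (fun e => {x : RepCoords s t d → k | HasSplitSubrep e (coordMatrix x)})
    (fun e _ => zeroLocus_vanishingIdeal_hasSplitSubrep_subset e) fun e he huniv => by
      obtain ⟨hed, hng⟩ := hfin.mem_toFinset.1 he
      exact hng (genericSub_iff_forall_hasSplitSubrep.2 ⟨hed, Set.eq_univ_iff_forall.1 huniv⟩)
  have hdim := dimVec_matToRep (coordMatrix x)
  refine ⟨matToRep s t k d (coordMatrix x), hdim, fun U hU => ?_⟩
  by_contra hng
  have hle : (matToRep s t k d (coordMatrix x)).subDim U ≤ d := fun i =>
    (Submodule.finrank_le (U i)).trans (congrFun hdim i).le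
  exact hx _ (hfin.mem_toFinset.2 ⟨hle, hng⟩) hU.hasSplitSubrep

end Generic

theorem stmt5_general (k : Type) [Field k] [IsAlgClosed k] {Q0 Q1 : Type} [Fintype Q0]
    (s t : Q1 → Q0) (d : Q0 → ℕ) :
    SstCone k s t d =
      {θ : Q0 → ℝ | QRep.pair θ d = 0 ∧
        ∀ e : Q0 → ℕ, GenericSub k s t e d → QRep.pair θ e ≤ 0} := by
  ext θ
  constructor
  · rintro ⟨hd, M, hM, hss⟩
    refine ⟨hd, fun e he => ?_⟩
    obtain ⟨U, hU, rfl⟩ := he.2 M hM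
    exact hss.2 U hU
  · rintro ⟨hd, hθ⟩
    obtain ⟨M, rfl, hgen⟩ := exists_forall_isSubrep_genericSub k s t d
    exact ⟨hd, M, rfl, hd, fun U hU => hθ _ (hgen U hU)⟩

/-- the semistable cone of `d` equals the set of `θ` orthogonal to `d` with
`θ(e) ≤ 0` for all generic subdimension vectors `e` of `d`. -/
theorem stmt5 (k : Type) [Field k] [IsAlgClosed k] [CharZero k]
    {Q0 Q1 : Type} [Fintype Q0] [Fintype Q1] (s t : Q1 → Q0) (d : Q0 → ℕ) :
    SstCone k s t d =
      {θ : Q0 → ℝ | QRep.pair θ d = 0 ∧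
        ∀ e : Q0 → ℕ, GenericSub k s t e d → QRep.pair θ e ≤ 0} :=
  stmt5_general k s t d
end

section
/- For every positive integer k, the semistable cone of d equals the semistable cone of k·d: Cone(d) = Cone(kd). -/
open scoped BigOperators

/-!
A direct sum of `m` copies of a `θ`-semistable representation is `θ`-semistable. Conversely, suppose
that no representation of dimension vector `d` is `θ`-semistable, where `θ · d = 0`. Then the
representations with a subrepresentation of dimension vector `e`, for the finitely many `e ≤ d` with
`θ · e > 0`, cover the affine space `Rep(Q, d)`, so for some such `e` they are dense. A generic
point `W` of `Rep(Q, d)`, over a large field, then has a subrepresentation `T` of dimension vector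
`e`, and `Ext¹(T, W / T) = 0`: in characteristic zero there are derivations moving `W` in any
direction, and they move `T` along with it. This vanishing passes to `T^m ⊆ W^m`, and it lets `T^m`
extend along every formal deformation of `W^m`, in particular along the line to an arbitrary
representation of dimension vector `m · d`. By the properness of Grassmannians and the
Nullstellensatz, that representation has a subrepresentation of dimension vector `m · e` too, so it
is not semistable.
-/

universe u v w

section Derivations

open MvPolynomial

theorem exists_derivation_algebraMap_eq {k A L : Type*} [CommRing k] [CommRing A] [CommRing L]
    [Algebra k A] [Algebra k L] [Algebra A L] [IsScalarTower k A L] [Algebra.FormallyEtale A L]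
    (d : Derivation k A L) : ∃ δ : Derivation k L L, ∀ a, δ (algebraMap A L a) = d a := by
  let e := KaehlerDifferential.tensorKaehlerEquivOfFormallyEtale k A L
  refine ⟨(d.liftKaehlerDifferential.liftBaseChange L ∘ₗ e.symm.toLinearMap).compDer
    (KaehlerDifferential.D k L), fun a => ?_⟩
  simp [e, KaehlerDifferential.tensorKaehlerEquivOfFormallyEtale_symm_D_algebraMap]

variable {k L ι : Type*} [Field k] [CharZero k] [Field L] [Algebra k L]

theorem formallyEtale_of_isTranscendenceBasis [Algebra (MvPolynomial ι k) L]
    [IsScalarTower k (MvPolynomial ι k) L]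
    (h : IsTranscendenceBasis k fun i => algebraMap (MvPolynomial ι k) L (X i)) :
    Algebra.FormallyEtale (MvPolynomial ι k) L := by
  have aeval_eq : aeval (fun i => algebraMap (MvPolynomial ι k) L (X i)) =
      IsScalarTower.toAlgHom k (MvPolynomial ι k) L := by
    ext i; simp
  have : FaithfulSMul (MvPolynomial ι k) L := by
    rw [faithfulSMul_iff_algebraMap_injective]
    simpa only [AlgebraicIndependent, aeval_eq] using! h.1
  let := FractionRing.liftAlgebra (MvPolynomial ι k) L
  have := FractionRing.isScalarTower_liftAlgebra (MvPolynomial ι k) L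
  have := h.isAlgebraic
  have : Algebra.IsAlgebraic (MvPolynomial ι k) L :=
    .of_ringHom_of_comp_eq h.1.aevalEquiv (RingHom.id L) h.1.aevalEquiv.surjective
      Function.injective_id <| by
        ext i <;> simp [IsScalarTower.algebraMap_apply k (MvPolynomial ι k) L]
  have : Algebra.IsAlgebraic (FractionRing (MvPolynomial ι k)) L :=
    IsFractionRing.comap_isAlgebraic_iff.1 this
  have : Algebra.FormallyEtale (FractionRing (MvPolynomial ι k)) L := .of_isSeparable _ _
  have : Algebra.FormallyEtale (MvPolynomial ι k) (FractionRing (MvPolynomial ι k)) :=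
    .of_isLocalization (nonZeroDivisors _)
  exact .comp _ (FractionRing (MvPolynomial ι k)) _

theorem exists_derivation_of_isTranscendenceBasis {y : ι → L} (hy : IsTranscendenceBasis k y)
    (c : ι → L) : ∃ δ : Derivation k L L, ∀ i, δ (y i) = c i := by
  let := (aeval (R := k) y).toAlgebra
  have : IsScalarTower k (MvPolynomial ι k) L := .of_algebraMap_eq fun r => by
    simp [RingHom.algebraMap_toAlgebra]
  have map_X : ∀ i, algebraMap (MvPolynomial ι k) L (X i) = y i := fun i => aeval_X y i
  have := formallyEtale_of_isTranscendenceBasis (k := k) (L := L) (ι := ι) (by simpa only [map_X])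
  obtain ⟨δ, hδ⟩ := exists_derivation_algebraMap_eq (mkDerivation k c)
  exact ⟨δ, fun i => by rw [← map_X, hδ, mkDerivation_X]⟩

theorem exists_derivation_of_algebraicIndependent {x : ι → L} (hx : AlgebraicIndependent k x)
    (c : ι → L) : ∃ δ : Derivation k L L, ∀ i, δ (x i) = c i := by
  obtain ⟨B, hB, basis⟩ := exists_isTranscendenceBasis_superset (AlgebraicIndependent.coe_range hx)
  obtain ⟨δ, hδ⟩ := exists_derivation_of_isTranscendenceBasis basis
    (Function.extend (fun i => (⟨x i, hB ⟨i, rfl⟩⟩ : B)) c 0)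
  have inj : Function.Injective fun i => (⟨x i, hB ⟨i, rfl⟩⟩ : B) :=
    fun i j h => hx.injective (congrArg Subtype.val h)
  exact ⟨δ, fun i => (hδ ⟨x i, hB ⟨i, rfl⟩⟩).trans (inj.extend_apply ..)⟩

end Derivations

section GenericPoints

open MvPolynomial

variable {k σ : Type*} [Field k]

theorem exists_vanishingIdeal_eq_bot_of_iUnion_eq_univ [Infinite k] {ι : Type*} [Finite ι]
    {P : ι → Set (σ → k)} (hP : ⋃ i, P i = Set.univ) : ∃ i, vanishingIdeal k (P i) = ⊥ := by
  by_contra! hne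
  choose f mem ne using fun i => Submodule.exists_mem_ne_zero_of_ne_bot (hne i)
  have := Fintype.ofFinite ι
  have prod_eq_zero : ∏ i, f i = 0 := MvPolynomial.funext fun x => by
    obtain ⟨i, hi⟩ := Set.mem_iUnion.1 (hP.symm ▸ Set.mem_univ x)
    rw [map_prod, map_zero]
    exact Finset.prod_eq_zero (Finset.mem_univ i) (mem i x hi)
  exact Finset.prod_ne_zero_iff.2 (fun i _ => ne i) prod_eq_zero

/-- `L` is a residue field of the ring of all functions `P → k`, in which the polynomials embed, so
that arbitrary choices made at the points of `P` have a value at the generic point `φ`. -/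
theorem exists_genericPoint {k : Type u} {σ : Type v} [Field k] {P : Set (σ → k)}
    (hP : vanishingIdeal k P = ⊥) :
    ∃ (L : Type (max u v)) (_ : Field L) (_ : Algebra k L) (φ : (P → k) →ₐ[k] L),
      AlgebraicIndependent k fun j => φ fun x => x.1 j := by
  let ev : MvPolynomial σ k →ₐ[k] (P → k) := aeval fun j x => x.1 j
  have ev_apply (p : MvPolynomial σ k) (x : P) : ev p x = aeval x.1 p := by
    exact congrArg (fun f : MvPolynomial σ k →ₐ[k] k => f p)
      (show (Pi.evalAlgHom k (fun _ => k) x).comp ev = aeval x.1 by ext j; simp [ev])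
  have ev_injective : Function.Injective ev := by
    refine (injective_iff_map_eq_zero ev).2 fun p hp => ?_
    have : p ∈ vanishingIdeal k P := fun x hx => by rw [← ev_apply p ⟨x, hx⟩, hp, Pi.zero_apply]
    rwa [hP] at this
  obtain ⟨𝔭, _, comap_eq⟩ := Ideal.exists_comap_eq_of_mem_minimalPrimes_of_injective
    (f := ev.toRingHom) ev_injective ⊥ (by simp [IsDomain.minimalPrimes_eq_singleton_bot])
  let φ : (P → k) →ₐ[k] 𝔭.ResidueField := IsScalarTower.toAlgHom k (P → k) 𝔭.ResidueField
  refine ⟨𝔭.ResidueField, inferInstance, inferInstance, φ, ?_⟩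
  have aeval_eq : aeval (fun j => φ fun x => x.1 j) = φ.comp ev := by
    ext j; simp [ev]
  rw [AlgebraicIndependent, aeval_eq, injective_iff_map_eq_zero]
  intro p hp
  have : ev p ∈ 𝔭 := Ideal.algebraMap_residueField_eq_zero.1 hp
  exact comap_eq.le this

end GenericPoints

section Subrepresentations

open Matrix Kronecker MvPolynomial

variable {Q0 : Type*} {Q1 : Type u}

/-- Families of matrices of shape `D (t a) × D (s a)`: representations of the quiver `s, t` whose
space at the vertex `i` is `R ^ D i`. -/
abbrev MatRep (s t : Q1 → Q0) (D : Q0 → Type*) (R : Type*) :=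
  ∀ a, Matrix (D (t a)) (D (s a)) R

/-- The representation with given matrix entries, a point of the affine space `Rep(Q, D)`. -/
def MatRep.ofCoords {s t : Q1 → Q0} {D : Q0 → Type v} {R : Type*}
    (x : (Σ a, D (t a) × D (s a)) → R) : MatRep s t D R :=
  fun a => .of fun p q => x ⟨a, p, q⟩

variable {s t : Q1 → Q0} {D : Q0 → Type v} {E : Q0 → Type*} [∀ i, Fintype (D i)]
  [∀ i, Fintype (E i)] {R S : Type*} [CommRing R] [CommRing S]

/-- `Z` embeds the representation `T` in the representation `W`, with `Z i` split injective at every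
vertex `i`; the splittings need not commute with the arrows. -/
structure IsSubrepEmbedding [∀ i, DecidableEq (E i)] (W : MatRep s t D R) (T : MatRep s t E R)
    (Z : ∀ i, Matrix (D i) (E i) R) : Prop where
  exists_leftInverse : ∀ i, ∃ Z' : Matrix (E i) (D i) R, Z' * Z i = 1
  mul_eq : ∀ a, W a * Z (s a) = Z (t a) * T a

variable (E) in
/-- `W` has a subrepresentation of dimension vector `i ↦ |E i|` that is a direct summand at every
vertex. -/
def HasSubrep [∀ i, DecidableEq (E i)] (W : MatRep s t D R) : Prop :=
  ∃ T Z, IsSubrepEmbedding (E := E) W T Z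

/-- The vanishing of `Ext¹(T, W / T)` for `T` embedded in `W` by `Z`: every family of matrices is,
modulo `Z`, a coboundary `Y T - W Y`. -/
def ExtVanishes (W : MatRep s t D R) (T : MatRep s t E R) (Z : ∀ i, Matrix (D i) (E i) R) : Prop :=
  ∀ C : ∀ a, Matrix (D (t a)) (E (s a)) R, ∃ (Y : ∀ i, Matrix (D i) (E i) R) (A : MatRep s t E R),
    ∀ a, Z (t a) * A a + Y (t a) * T a - W a * Y (s a) = C a

theorem ExtVanishes.kronecker_one {M : Type*} [Fintype M] [DecidableEq M] {W : MatRep s t D R}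
    {T : MatRep s t E R} {Z : ∀ i, Matrix (D i) (E i) R} (h : ExtVanishes W T Z) :
    ExtVanishes (s := s) (t := t) (D := fun i => D i × M) (E := fun i => E i × M)
      (fun a => W a ⊗ₖ 1) (fun a => T a ⊗ₖ 1) (fun i => Z i ⊗ₖ 1) := by
  intro C
  choose Y A hYA using fun μν : M × M => h fun a => .of fun p q => C a (p, μν.1) (q, μν.2)
  refine ⟨fun i => .of fun p q => Y (p.2, q.2) i p.1 q.1,
    fun a => .of fun p q => A (p.2, q.2) a p.1 q.1, fun a => ?_⟩
  ext ⟨p, μ⟩ ⟨q, ν⟩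
  simpa [Matrix.mul_apply, Fintype.sum_prod_type, Matrix.one_apply] using
    congr_fun₂ (hYA (μ, ν) a) p q

variable [∀ i, DecidableEq (E i)]

variable (s t D E R) in
/-- The points of the affine space `Rep(Q, D)` whose representation has a subrepresentation of
dimension vector `i ↦ |E i|`. -/
def subrepLocus : Set ((Σ a, D (t a) × D (s a)) → R) :=
  {x | HasSubrep E (MatRep.ofCoords (s := s) (t := t) x)}

theorem HasSubrep.map {W : MatRep s t D R} (hW : HasSubrep E W) (f : R →+* S) :
    HasSubrep E fun a => (W a).map f := by
  obtain ⟨T, Z, left_inv, mul_eq⟩ := hW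
  refine ⟨fun a => (T a).map f, fun i => (Z i).map f, fun i => ?_, fun a => ?_⟩
  · obtain ⟨Z', hZ'⟩ := left_inv i
    exact ⟨Z'.map f, by rw [← Matrix.map_mul, hZ', Matrix.map_one f f.map_zero f.map_one]⟩
  · rw [← Matrix.map_mul, mul_eq, Matrix.map_mul]

theorem hasSubrep_pi {P : Type*} {W : MatRep s t D (P → R)}
    (hW : ∀ x, HasSubrep E fun a => (W a).map (· x)) : HasSubrep E W := by
  choose T Z emb using hW
  choose Z' hZ' using fun x => (emb x).exists_leftInverse
  refine ⟨fun a => .of fun p q x => T x a p q, fun i => .of fun p q x => Z x i p q,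
    fun i => ⟨.of fun p q x => Z' x i p q, ?_⟩, fun a => ?_⟩ <;> ext p q x
  · simpa [Matrix.mul_apply, Matrix.one_apply, apply_ite (fun f : P → R => f x)] using
      congr_fun₂ (hZ' x i) p q
  · simpa [Matrix.mul_apply] using congr_fun₂ ((emb x).mul_eq a) p q

theorem IsSubrepEmbedding.kronecker_one {M : Type*} [Fintype M] [DecidableEq M]
    {W : MatRep s t D R} {T : MatRep s t E R} {Z : ∀ i, Matrix (D i) (E i) R}
    (h : IsSubrepEmbedding W T Z) :
    IsSubrepEmbedding (s := s) (t := t) (D := fun i => D i × M) (E := fun i => E i × M)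
      (fun a => W a ⊗ₖ 1) (fun a => T a ⊗ₖ 1) (fun i => Z i ⊗ₖ 1) where
  exists_leftInverse i := by
    obtain ⟨Z', hZ'⟩ := h.exists_leftInverse i
    exact ⟨Z' ⊗ₖ 1, by rw [← mul_kronecker_mul, hZ', Matrix.one_mul, one_kronecker_one]⟩
  mul_eq a := by rw [← Matrix.mul_kronecker_mul, h.mul_eq, ← Matrix.mul_kronecker_mul]

theorem map_mul_derivation {k l m n : Type*} [CommRing k] [Algebra k R] [Fintype m]
    (δ : Derivation k R R) (A : Matrix l m R) (B : Matrix m n R) :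
    (A * B).map δ = A * B.map δ + A.map δ * B := by
  ext p q
  simp [Matrix.mul_apply, Finset.sum_add_distrib, mul_comm]

/-- Differentiate `W Z = Z T` along a derivation moving the generic matrix `W` in the direction
`C Z'`, where `Z' Z = 1`. -/
theorem IsSubrepEmbedding.extVanishes_of_algebraicIndependent {k L : Type*} [Field k] [CharZero k]
    [Field L] [Algebra k L] {x : (Σ a, D (t a) × D (s a)) → L} (hx : AlgebraicIndependent k x)
    {T : MatRep s t E L} {Z : ∀ i, Matrix (D i) (E i) L}
    (h : IsSubrepEmbedding (MatRep.ofCoords x) T Z) : ExtVanishes (MatRep.ofCoords x) T Z := by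
  intro C
  choose Z' hZ' using h.exists_leftInverse
  obtain ⟨δ, hδ⟩ := exists_derivation_of_algebraicIndependent hx
    fun j => (C j.1 * Z' (s j.1)) j.2.1 j.2.2
  have map_ofCoords (a : Q1) : (MatRep.ofCoords x a).map δ = C a * Z' (s a) := by
    ext p q; exact hδ ⟨a, p, q⟩
  refine ⟨fun i => (Z i).map δ, fun a => (T a).map δ, fun a => ?_⟩
  have leibniz := congrArg (·.map δ) (h.mul_eq a)
  simp only [map_mul_derivation, map_ofCoords, Matrix.mul_assoc, hZ', Matrix.mul_one] at leibniz
  rw [← leibniz, add_sub_cancel_left]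

theorem exists_extVanishes_of_vanishingIdeal_subrepLocus_eq_bot {k : Type w} [Field k] [CharZero k]
    (dense : vanishingIdeal k (subrepLocus s t D E k) = ⊥) :
    ∃ (L : Type (max u v w)) (_ : Field L) (_ : Algebra k L) (W : MatRep s t D L)
      (T : MatRep s t E L) (Z : ∀ i, Matrix (D i) (E i) L),
      IsSubrepEmbedding W T Z ∧ ExtVanishes W T Z := by
  obtain ⟨L, _, _, φ, indep⟩ := exists_genericPoint dense
  let W : MatRep s t D (subrepLocus s t D E k → k) := fun a => .of fun p q x => x.1 ⟨a, p, q⟩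
  obtain ⟨T, Z, h⟩ := (hasSubrep_pi (E := E) (W := W) fun x => x.2).map φ.toRingHom
  exact ⟨L, inferInstance, inferInstance, _, T, Z, h, h.extVanishes_of_algebraicIndependent indep⟩

end Subrepresentations

section FormalDeformations

open Matrix PowerSeries Finset

theorem exists_eq_of_truncation {β : Type*} [Zero β] (F : ℕ → (ℕ → β) → β) :
    ∃ f : ℕ → β, ∀ n, f n = F n fun m => if m < n then f m else 0 := by
  let step (n : ℕ) (ih : ∀ m, m < n → β) : β := F n fun m => if h : m < n then ih m h else 0
  refine ⟨wellFounded_lt.fix step, fun n => ?_⟩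
  rw [wellFounded_lt.fix_eq]
  rfl

theorem coeff_matrix_mul {R l m n : Type*} [CommRing R] [Fintype m] (A : Matrix l m R⟦X⟧)
    (B : Matrix m n R⟦X⟧) (d : ℕ) :
    (A * B).map (coeff d) = ∑ p ∈ antidiagonal d, A.map (coeff p.1) * B.map (coeff p.2) := by
  ext i j
  simp only [Matrix.map_apply, Matrix.mul_apply, Matrix.sum_apply, map_sum, coeff_mul]
  exact sum_comm

theorem sum_antidiagonal_mul_of_ne_zero {R l m n : Type*} [CommRing R] [Fintype m]
    (A : ℕ → Matrix l m R) (B : ℕ → Matrix m n R) {d : ℕ} (hd : d ≠ 0) :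
    ∑ p ∈ antidiagonal d, A p.1 * B p.2 = A 0 * B d + A d * B 0 +
      ∑ p ∈ antidiagonal d,
        (if p.1 < d then A p.1 else 0) * (if p.2 < d then B p.2 else 0) := by
  rw [← sub_eq_iff_eq_add, ← sum_sub_distrib,
    sum_eq_add_of_mem (0, d) (d, 0) (by simp) (by simp) (by simp [hd.symm])]
  · simp
  · rintro ⟨i, j⟩ hij ⟨ne_left, ne_right⟩
    obtain rfl := mem_antidiagonal.1 hij
    have : i ≠ 0 := by rintro rfl; simp at ne_left
    have : j ≠ 0 := by rintro rfl; simp at ne_right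
    simp [Nat.pos_of_ne_zero, *]

theorem exists_leftInverse_of_constantCoeff {R m n : Type*} [CommRing R] [Fintype m] [Finite n]
    [DecidableEq n] {Z : Matrix m n R⟦X⟧}
    (h : ∃ Z' : Matrix n m R, Z' * Z.map constantCoeff = 1) :
    ∃ Z' : Matrix n m R⟦X⟧, Z' * Z = 1 := by
  have := Fintype.ofFinite n
  obtain ⟨Z', hZ'⟩ := h
  have isUnit_det : IsUnit (Z'.map (C (R := R)) * Z).det := by
    have map_C : (Z'.map (C (R := R))).map constantCoeff = Z' := by ext; simp
    rw [isUnit_iff_constantCoeff, RingHom.map_det, RingHom.mapMatrix_apply, Matrix.map_mul, map_C,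
      hZ', det_one]
    exact isUnit_one
  exact ⟨(Z'.map (C (R := R)) * Z)⁻¹ * Z'.map C,
    by rw [Matrix.mul_assoc, nonsing_inv_mul _ isUnit_det]⟩

variable {Q0 Q1 : Type*} {s t : Q1 → Q0} {D E : Q0 → Type*} [∀ i, Fintype (D i)]
  [∀ i, Fintype (E i)] {R : Type*} [CommRing R]

theorem ExtVanishes.exists_coeff {W : ℕ → MatRep s t D R} {T : MatRep s t E R}
    {Z : ∀ i, Matrix (D i) (E i) R} (mul_eq : ∀ a, W 0 a * Z (s a) = Z (t a) * T a)
    (h : ExtVanishes (W 0) T Z) :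
    ∃ (z : ℕ → ∀ i, Matrix (D i) (E i) R) (τ : ℕ → MatRep s t E R), z 0 = Z ∧
      ∀ d a, ∑ p ∈ antidiagonal d, W p.1 a * z p.2 (s a) =
        ∑ p ∈ antidiagonal d, z p.1 (t a) * τ p.2 a := by
  classical
  choose Y A hYA using h
  -- The terms of degree `d` of `W z - z τ` not involving `z d` and `τ d`.
  let defect (d : ℕ) (c : ℕ → (∀ i, Matrix (D i) (E i) R) × MatRep s t E R) (a : Q1) :
      Matrix (D (t a)) (E (s a)) R :=
    W d a * Z (s a) + ∑ p ∈ antidiagonal d, (if p.1 < d then W p.1 a else 0) * (c p.2).1 (s a) -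
      ∑ p ∈ antidiagonal d, (c p.1).1 (t a) * (c p.2).2 a
  obtain ⟨c, hc⟩ := exists_eq_of_truncation fun d c =>
    if d = 0 then (Z, T) else (Y (defect d c), A (defect d c))
  have c_zero : c 0 = (Z, T) := by simpa using hc 0
  refine ⟨fun d => (c d).1, fun d => (c d).2, congrArg Prod.fst c_zero, fun d a => ?_⟩
  rcases eq_or_ne d 0 with rfl | hd
  · simpa [c_zero] using mul_eq a
  · have solves := hYA (defect d fun m => if m < d then c m else 0) a
    obtain ⟨z_eq, τ_eq⟩ := Prod.ext_iff.1 ((hc d).trans (if_neg hd))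
    dsimp only at z_eq τ_eq
    rw [← z_eq, ← τ_eq] at solves
    simp only [defect, apply_ite Prod.fst, apply_ite Prod.snd, ite_apply, Prod.fst_zero,
      Prod.snd_zero, Pi.zero_apply] at solves
    rw [sum_antidiagonal_mul_of_ne_zero (W · a) (fun d => (c d).1 (s a)) hd,
      sum_antidiagonal_mul_of_ne_zero (fun d => (c d).1 (t a)) (fun d => (c d).2 a) hd]
    simp only [c_zero]
    grind

theorem ExtVanishes.hasSubrep_powerSeries [∀ i, DecidableEq (E i)] {W : MatRep s t D R⟦X⟧}
    {T : MatRep s t E R} {Z : ∀ i, Matrix (D i) (E i) R}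
    (h : ExtVanishes (fun a => (W a).map constantCoeff) T Z)
    (emb : IsSubrepEmbedding (fun a => (W a).map constantCoeff) T Z) : HasSubrep E W := by
  obtain ⟨z, τ, z_zero, hzτ⟩ := ExtVanishes.exists_coeff
    (W := fun d a => (W a).map (coeff d)) (T := T) (Z := Z)
    (by simpa only [coeff_zero_eq_constantCoeff] using emb.mul_eq)
    (by simpa only [coeff_zero_eq_constantCoeff] using h)
  let z' (i : Q0) : Matrix (D i) (E i) R⟦X⟧ := .of fun p q => .mk fun d => z d i p q
  let τ' : MatRep s t E R⟦X⟧ := fun a => .of fun p q => .mk fun d => τ d a p q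
  have z'_coeff (d : ℕ) (i : Q0) : (z' i).map (coeff d) = z d i := by ext; simp [z']
  have τ'_coeff (d : ℕ) (a : Q1) : (τ' a).map (coeff d) = τ d a := by ext; simp [τ']
  refine ⟨τ', z', fun i => ?_, fun a => ?_⟩
  · refine exists_leftInverse_of_constantCoeff ?_
    have := z'_coeff 0 i
    rw [coeff_zero_eq_constantCoeff, z_zero] at this
    exact this ▸ emb.exists_leftInverse i
  · ext p q d
    have coeff_eq : (W a * z' (s a)).map (coeff d) = (z' (t a) * τ' a).map (coeff d) := by
      simp only [coeff_matrix_mul, z'_coeff, τ'_coeff, hzτ]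
    exact congr_fun₂ coeff_eq p q

end FormalDeformations

section Specialization

open Matrix

theorem exists_submatrix_det_ne_zero {K m n : Type*} [Field K] [Fintype m] [Fintype n]
    [DecidableEq n] {Z : Matrix m n K} (hZ : ∃ Z' : Matrix n m K, Z' * Z = 1) :
    ∃ τ : n → m, (Z.submatrix τ id).det ≠ 0 := by
  obtain ⟨Z', hZ'⟩ := hZ
  obtain ⟨κ, τ, τ_injective, span_eq, indep⟩ := exists_linearIndependent' K Z.row
  have : Fintype κ := Fintype.ofInjective τ τ_injective
  have card_le_rank : Fintype.card n ≤ Z.rank := by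
    simpa [hZ', rank_one] using rank_mul_le_right Z' Z
  have card_eq : Fintype.card n = Fintype.card κ := by
    rw [linearIndependent_iff_card_eq_finrank_span.1 indep, Set.finrank, span_eq,
      ← rank_eq_finrank_span_row, card_le_rank.antisymm (rank_le_card_width Z)]
  let e := Fintype.equivOfCardEq card_eq
  refine ⟨τ ∘ e, fun det_eq_zero => ?_⟩
  have := linearIndependent_rows_iff_isUnit (A := Z.submatrix (τ ∘ e) id).1
    (indep.comp e e.injective)
  exact (isUnit_iff_isUnit_det _).1 this |>.ne_zero det_eq_zero

/-- The rows `τ` are those of a minor of maximal valuation; the entries in question are quotients of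
minors by this one, by Cramer's rule. -/
theorem exists_submatrix_mul_inv_mem {K m n : Type*} [Field K] [Fintype m] [Fintype n]
    [DecidableEq n] (O : ValuationSubring K) {Z : Matrix m n K}
    (hZ : ∃ Z' : Matrix n m K, Z' * Z = 1) :
    ∃ τ : n → m, IsUnit (Z.submatrix τ id).det ∧
      ∀ p j, (Z * (Z.submatrix τ id)⁻¹) p j ∈ O := by
  classical
  obtain ⟨τ₀, det_ne_zero⟩ := exists_submatrix_det_ne_zero hZ
  have : Nonempty (n → m) := ⟨τ₀⟩
  obtain ⟨τ, hτ⟩ := Finite.exists_max fun τ : n → m => O.valuation (Z.submatrix τ id).det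
  have isUnit_det : IsUnit (Z.submatrix τ id).det := isUnit_iff_ne_zero.2 fun h =>
    det_ne_zero <| by simpa [h] using hτ τ₀
  refine ⟨τ, isUnit_det, fun p j => ?_⟩
  have updateRow_eq : (Z.submatrix τ id).updateRow j (Z p) =
      Z.submatrix (Function.update τ j p) id := by
    ext x y
    rcases eq_or_ne x j with rfl | hx <;> simp [*]
  have cramer : (Z * (Z.submatrix τ id)⁻¹) p j =
      (Z.submatrix (Function.update τ j p) id).det / (Z.submatrix τ id).det := by
    rw [← updateRow_eq, ← cramer_transpose_apply, cramer_eq_adjugate_mulVec, inv_def,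
      Ring.inverse_eq_inv', ← adjugate_transpose, mulVec_transpose, Matrix.mul_smul,
      Matrix.smul_apply, div_eq_inv_mul]
    rfl
  rw [← O.valuation_le_one_iff, cramer, map_div₀]
  exact div_le_one_of_le₀ (hτ _) zero_le

theorem exists_lift_valuationSubring {A K : Type*} [CommRing A] [Field K] {f : A →+* K}
    (hf : Function.Injective f) {I : Ideal A} (hI : I ≠ ⊤) :
    ∃ (O : ValuationSubring K) (g : A →+* O), O.subtype.comp g = f ∧
      ∀ x ∈ I, g x ∈ IsLocalRing.maximalIdeal O := by
  let e : A ≃+* f.range := .ofBijective f.rangeRestrict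
    ⟨fun x y h => hf (congrArg Subtype.val h), f.rangeRestrict_surjective⟩
  obtain ⟨O, range_le, nonunits⟩ := Ideal.image_subset_nonunits_valuationSubring
    (I.comap e.symm.toRingHom) (Ideal.comap_ne_top _ hI)
  refine ⟨O, f.codRestrict O.toSubring fun x => range_le ⟨x, rfl⟩, rfl, fun x hx => ?_⟩
  have : (e x : K) ∈ O.nonunits := nonunits ⟨e x, by simpa using hx, rfl⟩
  exact (IsLocalRing.mem_maximalIdeal _).2 (O.coe_mem_nonunits_iff.1 this)

theorem nonempty_algHom_adjoin_of_isAlgClosed {k A : Type*} [Field k] [IsAlgClosed k] [CommRing A]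
    [Nontrivial A] [Algebra k A] {S : Set A} (hS : S.Finite) :
    Nonempty (Algebra.adjoin k S →ₐ[k] k) := by
  have : Algebra.FiniteType k (Algebra.adjoin k S) :=
    (Subalgebra.fg_iff_finiteType _).1 (Subalgebra.fg_def.2 ⟨S, hS, rfl⟩)
  obtain ⟨𝔪, _⟩ := Ideal.exists_maximal (Algebra.adjoin k S)
  let := Ideal.Quotient.field 𝔪
  have := finite_of_finite_type_of_isJacobsonRing k (Algebra.adjoin k S ⧸ 𝔪)
  have bijective := IsAlgClosed.algebraMap_bijective_of_isIntegral (k := k)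
    (K := Algebra.adjoin k S ⧸ 𝔪)
  exact ⟨(AlgEquiv.ofBijective (Algebra.ofId k _) bijective).symm.toAlgHom.comp
    (Ideal.Quotient.mkₐ k 𝔪)⟩

variable {Q0 Q1 : Type*} {s t : Q1 → Q0} {D E : Q0 → Type*} [∀ i, Fintype (D i)]
  [∀ i, Fintype (E i)] [∀ i, DecidableEq (E i)]

theorem hasSubrep_of_map_mul_eq {R S : Type*} [CommRing R] [CommRing S] {f : R →+* S}
    (hf : Function.Injective f) {W : MatRep s t D R} {Z : ∀ i, Matrix (D i) (E i) R}
    (left_inv : ∀ i, ∃ Z' : Matrix (E i) (D i) R, Z' * Z i = 1) {T : MatRep s t E S}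
    (mul_eq : ∀ a, (W a).map f * (Z (s a)).map f = (Z (t a)).map f * T a) : HasSubrep E W := by
  refine ⟨fun a => (left_inv (t a)).choose * (W a * Z (s a)), Z, left_inv, fun a => ?_⟩
  apply Matrix.map_injective hf
  have := congrArg (·.map f) (left_inv (t a)).choose_spec
  simp only [Matrix.map_mul, Matrix.map_one f f.map_zero f.map_one] at this ⊢
  rw [mul_eq, ← Matrix.mul_assoc _ ((Z (t a)).map f), this, Matrix.one_mul]

theorem HasSubrep.of_valuationSubring {K : Type*} [Field K] {O : ValuationSubring K}
    {W : MatRep s t D O} (h : HasSubrep E fun a => (W a).map O.subtype) : HasSubrep E W := by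
  classical
  obtain ⟨T, Z, left_inv, mul_eq⟩ := h
  choose τ isUnit_det mem using fun i => exists_submatrix_mul_inv_mem O (left_inv i)
  let G (i : Q0) := (Z i).submatrix (τ i) id
  have inv_mul (i : Q0) : (G i)⁻¹ * G i = 1 := nonsing_inv_mul _ (isUnit_det i)
  let Y (i : Q0) : Matrix (D i) (E i) O := .of fun p j => ⟨(Z i * (G i)⁻¹) p j, mem i p j⟩
  have Y_map (i : Q0) : (Y i).map O.subtype = Z i * (G i)⁻¹ := rfl
  have submatrix_eq (i : Q0) : (Y i).submatrix (τ i) id = 1 := by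
    apply Matrix.map_injective (f := O.subtype) Subtype.val_injective
    beta_reduce
    rw [← submatrix_map, Y_map, Matrix.map_one _ (map_zero _) (map_one _)]
    exact mul_nonsing_inv (G i) (isUnit_det i)
  refine hasSubrep_of_map_mul_eq (f := O.subtype) Subtype.val_injective (Z := Y)
    (T := fun a => G (t a) * T a * (G (s a))⁻¹)
    (fun i => ⟨(1 : Matrix (D i) (D i) O).submatrix (τ i) id, ?_⟩) fun a => ?_
  · rw [← submatrix_eq i, ← submatrix_id_id (Y i), ← submatrix_mul _ _ _ _ _ Function.bijective_id]
    simp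
  · rw [Y_map, Y_map, ← Matrix.mul_assoc, mul_eq, Matrix.mul_assoc (G (t a)),
      Matrix.mul_assoc (Z (t a)) _ (G _ * _), ← Matrix.mul_assoc _ (G (t a)), inv_mul,
      Matrix.one_mul, Matrix.mul_assoc]

theorem HasSubrep.of_map_algebraMap [Finite Q0] {k K : Type*} [Field k] [IsAlgClosed k] [Field K]
    [Algebra k K] {W : MatRep s t D k} (h : HasSubrep E fun a => (W a).map (algebraMap k K)) :
    HasSubrep E W := by
  obtain ⟨T, Z, left_inv, mul_eq⟩ := h
  choose Z' hZ' using left_inv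
  let S : Set K := Set.range (fun x : Σ i, D i × E i => Z x.1 x.2.1 x.2.2) ∪
    Set.range fun x : Σ i, E i × D i => Z' x.1 x.2.1 x.2.2
  obtain ⟨ψ⟩ := nonempty_algHom_adjoin_of_isAlgClosed (k := k)
    (S := S) ((Set.finite_range _).union (Set.finite_range _))
  have mem (i : Q0) (p : D i) (q : E i) : Z i p q ∈ Algebra.adjoin k S :=
    Algebra.subset_adjoin (.inl ⟨⟨i, p, q⟩, rfl⟩)
  have mem' (i : Q0) (p : E i) (q : D i) : Z' i p q ∈ Algebra.adjoin k S :=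
    Algebra.subset_adjoin (.inr ⟨⟨i, p, q⟩, rfl⟩)
  have over_adjoin : HasSubrep E fun a => (W a).map (algebraMap k (Algebra.adjoin k S)) := by
    refine hasSubrep_of_map_mul_eq (f := (Algebra.adjoin k S).val.toRingHom)
      Subtype.val_injective (Z := fun i => .of fun p q => ⟨Z i p q, mem i p q⟩)
      (fun i => ⟨.of fun p q => ⟨Z' i p q, mem' i p q⟩, ?_⟩) mul_eq
    apply Matrix.map_injective (f := (Algebra.adjoin k S).val.toRingHom) Subtype.val_injective
    beta_reduce
    rw [Matrix.map_mul, Matrix.map_one _ (map_zero _) (map_one _)]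
    exact hZ' i
  simpa [Matrix.map_map, Function.comp_def] using over_adjoin.map ψ.toRingHom

theorem HasSubrep.of_sub_algebraMap_mem [Finite Q0] {k A K : Type*} [Field k] [IsAlgClosed k]
    [CommRing A] [Algebra k A] [Field K] {f : A →+* K} (hf : Function.Injective f) {I : Ideal A}
    (hI : I ≠ ⊤) {V : MatRep s t D A} {W : MatRep s t D k}
    (sub_mem : ∀ a p q, V a p q - algebraMap k A (W a p q) ∈ I)
    (h : HasSubrep E fun a => (V a).map f) : HasSubrep E W := by
  obtain ⟨O, g, rfl, mem_maximalIdeal⟩ := exists_lift_valuationSubring hf hI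
  have over_residueField := (HasSubrep.of_valuationSubring (W := fun a => (V a).map g) h).map
    (IsLocalRing.residue O)
  let _ := ((IsLocalRing.residue O).comp (g.comp (algebraMap k A))).toAlgebra
  have residue_eq : (fun a => ((V a).map g).map (IsLocalRing.residue O)) =
      fun a => (W a).map (algebraMap k (IsLocalRing.ResidueField O)) := by
    funext a
    ext p q
    have := (IsLocalRing.residue_eq_zero_iff _).2 (mem_maximalIdeal _ (sub_mem a p q))
    rwa [map_sub, map_sub, sub_eq_zero] at this
  exact HasSubrep.of_map_algebraMap (residue_eq ▸ over_residueField)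

end Specialization

section Density

open Matrix Kronecker Polynomial

variable {Q0 : Type*} {Q1 : Type u} [Finite Q0] {s t : Q1 → Q0}

/-- Join the given point to the one with vanishing `Ext¹` by the line `V` over `L[X]`. The
subrepresentation at `X = 0` extends over `L⟦X⟧`, and specializes to `X = 1`. -/
theorem ExtVanishes.hasSubrep_of_isAlgClosed {D E : Q0 → Type*} [∀ i, Fintype (D i)]
    [∀ i, Fintype (E i)] [∀ i, DecidableEq (E i)] {k L : Type*} [Field k] [IsAlgClosed k] [Field L]
    [Algebra k L] {W₀ : MatRep s t D L} {T : MatRep s t E L} {Z : ∀ i, Matrix (D i) (E i) L}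
    (h : ExtVanishes W₀ T Z) (emb : IsSubrepEmbedding W₀ T Z) (W : MatRep s t D k) :
    HasSubrep E W := by
  let V : MatRep s t D L[X] := fun a => (W₀ a).map C +
    (X : L[X]) • ((W a).map (algebraMap k L) - W₀ a).map C
  let f : L[X] →+* FractionRing (PowerSeries L) :=
    (algebraMap (PowerSeries L) _).comp coeToPowerSeries.ringHom
  have f_injective : Function.Injective f :=
    (IsFractionRing.injective (PowerSeries L) _).comp (coe_injective L)
  have V_constantCoeff (a : Q1) :
      ((V a).map coeToPowerSeries.ringHom).map PowerSeries.constantCoeff = W₀ a := by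
    ext p q; simp [V]
  refine HasSubrep.of_sub_algebraMap_mem f_injective
    (RingHom.ker_ne_top (evalRingHom (1 : L))) (V := V) (fun a p q => ?_) ?_
  · rw [RingHom.mem_ker]
    simp [V, Polynomial.algebraMap_apply]
  · have over_powerSeries : HasSubrep E fun a => (V a).map coeToPowerSeries.ringHom :=
      ExtVanishes.hasSubrep_powerSeries (T := T) (Z := Z)
        (by simpa only [V_constantCoeff] using h) (by simpa only [V_constantCoeff] using emb)
    exact over_powerSeries.map (algebraMap _ (FractionRing (PowerSeries L)))

theorem hasSubrep_prod_of_vanishingIdeal_subrepLocus_eq_bot {D : Q0 → Type v} {E : Q0 → Type*}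
    [∀ i, Fintype (D i)] [∀ i, Fintype (E i)] [∀ i, DecidableEq (E i)] {k : Type w} [Field k]
    [IsAlgClosed k] [CharZero k]
    (dense : MvPolynomial.vanishingIdeal k (subrepLocus s t D E k) = ⊥) {M : Type*} [Fintype M]
    [DecidableEq M] (W : MatRep s t (fun i => D i × M) k) : HasSubrep (fun i => E i × M) W := by
  obtain ⟨L, _, _, W₀, T, Z, emb, ext_vanishes⟩ :=
    exists_extVanishes_of_vanishingIdeal_subrepLocus_eq_bot dense
  exact ext_vanishes.kronecker_one.hasSubrep_of_isAlgClosed emb.kronecker_one W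

end Density

section SemistableCones

open Matrix Module

variable {k : Type} [Field k] {Q0 Q1 : Type} {s t : Q1 → Q0}

theorem QRep.exists_isSubrep_iff_hasSubrep (M : QRep k s t) {D E : Q0 → Type*}
    [∀ i, Fintype (D i)] [∀ i, DecidableEq (D i)] [∀ i, Fintype (E i)] [∀ i, DecidableEq (E i)]
    (b : ∀ i, Basis (D i) k (M.V i)) :
    (∃ U, M.IsSubrep U ∧ M.subDim U = fun i => Fintype.card (E i)) ↔
      HasSubrep E fun a => LinearMap.toMatrix (b (s a)) (b (t a)) (M.hom a) := by
  constructor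
  · rintro ⟨U, invariant, subDim_eq⟩
    have c (i : Q0) : Basis (E i) k (U i) :=
      (finBasisOfFinrankEq k (U i) (congrFun subDim_eq i)).reindex (Fintype.equivFin _).symm
    refine ⟨fun a => LinearMap.toMatrix (c (s a)) (c (t a)) ((M.hom a).restrict (invariant a)),
      fun i => LinearMap.toMatrix (c i) (b i) (U i).subtype, fun i => ?_, fun a => ?_⟩
    · obtain ⟨g, hg⟩ := (U i).subtype.exists_leftInverse_of_injective (U i).ker_subtype
      exact ⟨LinearMap.toMatrix (b i) (c i) g, by
        rw [← LinearMap.toMatrix_comp, hg, LinearMap.toMatrix_id]⟩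
    · rw [← LinearMap.toMatrix_comp, ← LinearMap.toMatrix_comp, LinearMap.subtype_comp_restrict]
      rfl
  · rintro ⟨T, Z, left_inv, mul_eq⟩
    let L (i : Q0) : (E i → k) →ₗ[k] M.V i := toLin (Pi.basisFun k (E i)) (b i) (Z i)
    have hom_comp (a : Q1) : M.hom a ∘ₗ L (s a) =
        L (t a) ∘ₗ toLin (Pi.basisFun k _) (Pi.basisFun k _) (T a) := by
      rw [← toLin_mul, ← mul_eq, toLin_mul _ (b (s a)), toLin_toMatrix]
    have L_injective (i : Q0) : Function.Injective (L i) := by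
      obtain ⟨Z', hZ'⟩ := left_inv i
      refine LinearMap.injective_of_comp_eq_id (L i) (toLin (b i) (Pi.basisFun k (E i)) Z') ?_
      rw [← toLin_mul, hZ', toLin_one]
    refine ⟨fun i => LinearMap.range (L i), ?_, funext fun i => ?_⟩
    · rintro a _ ⟨x, rfl⟩
      exact ⟨_, (LinearMap.congr_fun (hom_comp a) x).symm⟩
    · rw [QRep.subDim, LinearMap.finrank_range_of_inj (L_injective i), finrank_fintype_fun_eq_card]

/-- The sets of points with a subrepresentation of dimension vector `e` are finitely many and cover
the affine space `Rep(Q, d)`, so one of them is dense. -/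
theorem exists_vanishingIdeal_subrepLocus_eq_bot [Finite Q0] [Infinite k] {d : Q0 → ℕ}
    {P : (Q0 → ℕ) → Prop}
    (h : ∀ M : QRep k s t, M.dimVec = d → ∃ U, M.IsSubrep U ∧ P (M.subDim U)) :
    ∃ e ≤ d, P e ∧ MvPolynomial.vanishingIdeal k
      (subrepLocus s t (fun i => Fin (d i)) (fun i => Fin (e i)) k) = ⊥ := by
  have := Fintype.ofFinite Q0
  classical
  suffices cover : ⋃ e : {e : Set.Iic d // P e}, subrepLocus s t (fun i => Fin (d i))
      (fun i => Fin (e.1.1 i)) k = Set.univ by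
    obtain ⟨e, he⟩ := exists_vanishingIdeal_eq_bot_of_iUnion_eq_univ cover
    exact ⟨e.1.1, e.1.2, e.2, he⟩
  refine Set.eq_univ_of_forall fun x => Set.mem_iUnion.2 ?_
  let M := matToRep s t k d (MatRep.ofCoords x)
  have dimVec_eq : M.dimVec = d := funext fun i => finrank_fin_fun k
  obtain ⟨U, invariant, hP⟩ := h M dimVec_eq
  have le : M.subDim U ≤ d := fun i =>
    (Submodule.finrank_le (U i)).trans_eq (congrFun dimVec_eq i)
  refine ⟨⟨⟨M.subDim U, le⟩, hP⟩, ?_⟩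
  let b (i : Q0) : Basis (Fin (d i)) k (M.V i) := Pi.basisFun k (Fin (d i))
  have toMatrix_eq : (fun a => LinearMap.toMatrix (b (s a)) (b (t a)) (M.hom a)) =
      MatRep.ofCoords x :=
    funext fun a => LinearMap.toMatrix'_toLin' _
  have hasSubrep := (M.exists_isSubrep_iff_hasSubrep (E := fun i => Fin (M.subDim U i)) b).1
    ⟨U, invariant, by simp⟩
  rw [toMatrix_eq] at hasSubrep
  exact hasSubrep

theorem exists_genericSub_mul [IsAlgClosed k] [CharZero k] [Finite Q0] {d : Q0 → ℕ}
    {P : (Q0 → ℕ) → Prop}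
    (h : ∀ M : QRep k s t, M.dimVec = d → ∃ U, M.IsSubrep U ∧ P (M.subDim U)) :
    ∃ e, P e ∧ ∀ m, GenericSub k s t (fun i => m * e i) (fun i => m * d i) := by
  obtain ⟨e, le, hP, dense⟩ := exists_vanishingIdeal_subrepLocus_eq_bot h
  refine ⟨e, hP, fun m => ⟨fun i => Nat.mul_le_mul_left m (le i), fun M hM => ?_⟩⟩
  have b (i : Q0) : Basis (Fin (d i) × Fin m) k (M.V i) :=
    (finBasisOfFinrankEq k (M.V i) ((congrFun hM i).trans (mul_comm _ _))).reindex
      finProdFinEquiv.symm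
  obtain ⟨U, invariant, subDim_eq⟩ := (M.exists_isSubrep_iff_hasSubrep b).2
    (hasSubrep_prod_of_vanishingIdeal_subrepLocus_eq_bot dense _)
  exact ⟨U, invariant, by simpa [mul_comm m] using subDim_eq⟩

theorem finrank_eq_finrank_comap_inl_add_finrank_map_snd {V W : Type*} [AddCommGroup V] [Module k V]
    [AddCommGroup W] [Module k W] [FiniteDimensional k V] [FiniteDimensional k W]
    (U : Submodule k (V × W)) : finrank k U =
      finrank k (U.comap (LinearMap.inl k V W)) + finrank k (U.map (LinearMap.snd k V W)) := by
  have ker_eq : finrank k (LinearMap.ker ((LinearMap.snd k V W).domRestrict U)) =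
      finrank k (U.comap (LinearMap.inl k V W)) := by
    rw [← Submodule.finrank_map_subtype_eq, LinearMap.ker_domRestrict,
      Submodule.map_comap_subtype, ← LinearMap.range_inl, inf_comm, ← Submodule.map_comap_eq]
    exact (Submodule.equivMapOfInjective _ LinearMap.inl_injective _).finrank_eq.symm
  rw [← LinearMap.finrank_range_add_finrank_ker ((LinearMap.snd k V W).domRestrict U), ker_eq,
    LinearMap.range_domRestrict, add_comm]

theorem QRep.dimVec_dsum (M N : QRep k s t) : (M.dsum N).dimVec = M.dimVec + N.dimVec :=
  funext fun _ => finrank_prod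

variable [Fintype Q0] {θ : Q0 → ℝ}

theorem QRep.pair_add (θ : Q0 → ℝ) (x y : Q0 → ℕ) : pair θ (x + y) = pair θ x + pair θ y := by
  simp [pair, mul_add, Finset.sum_add_distrib]

theorem QRep.pair_mul (θ : Q0 → ℝ) (m : ℕ) (x : Q0 → ℕ) :
    pair θ (fun i => m * x i) = m * pair θ x := by
  simp [pair, Finset.mul_sum, mul_left_comm]

theorem QRep.Semistable.dsum {M N : QRep k s t} (hM : Semistable θ M) (hN : Semistable θ N) :
    Semistable θ (M.dsum N) := by
  refine ⟨by rw [dimVec_dsum, pair_add, hM.1, hN.1, add_zero], fun U hU => ?_⟩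
  let U₁ (i : Q0) := (U i).comap (LinearMap.inl k (M.V i) (N.V i))
  let U₂ (i : Q0) := (U i).map (LinearMap.snd k (M.V i) (N.V i))
  have invariant₁ : M.IsSubrep U₁ := fun a x hx => by
    have : (M.hom a x, N.hom a 0) ∈ U (t a) := hU a _ hx
    rwa [map_zero] at this
  have invariant₂ : N.IsSubrep U₂ := by
    rintro a _ ⟨x, hx, rfl⟩
    exact ⟨_, hU a x hx, rfl⟩
  have subDim_eq : (M.dsum N).subDim U = M.subDim U₁ + N.subDim U₂ :=
    funext fun i => finrank_eq_finrank_comap_inl_add_finrank_map_snd (U i)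
  rw [subDim_eq, pair_add]
  exact add_nonpos (hM.2 U₁ invariant₁) (hN.2 U₂ invariant₂)

theorem QRep.Semistable.exists_dimVec_eq_mul {M : QRep k s t} (hM : Semistable θ M) {m : ℕ}
    (hm : 0 < m) : ∃ N : QRep k s t, N.dimVec = (fun i => m * M.dimVec i) ∧ Semistable θ N := by
  induction m, hm using Nat.le_induction with
  | base => exact ⟨M, by simp, hM⟩
  | succ m _ ih =>
    obtain ⟨N, hN, semistable⟩ := ih
    refine ⟨N.dsum M, ?_, semistable.dsum hM⟩
    rw [dimVec_dsum, hN]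
    exact funext fun i => (add_one_mul _ _).symm

end SemistableCones

theorem stmt6_general (k : Type) [Field k] [IsAlgClosed k] [CharZero k] {Q0 Q1 : Type}
    [Fintype Q0] (s t : Q1 → Q0) (d : Q0 → ℕ) (m : ℕ) (hm : 0 < m) :
    SstCone k s t d = SstCone k s t (fun i => m * d i) := by
  ext θ
  constructor
  · rintro ⟨orthogonal, M, rfl, semistable⟩
    obtain ⟨N, hN, semistable⟩ := semistable.exists_dimVec_eq_mul hm
    exact ⟨by rw [QRep.pair_mul, orthogonal, mul_zero], N, hN, semistable⟩
  · rintro ⟨orthogonal, M, hM, semistable⟩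
    rw [QRep.pair_mul] at orthogonal
    have hm' : (0 : ℝ) < m := Nat.cast_pos.2 hm
    have orthogonal : QRep.pair θ d = 0 := (mul_eq_zero.1 orthogonal).resolve_left hm'.ne'
    refine ⟨orthogonal, ?_⟩
    by_contra! not_semistable
    have destabilized (N : QRep k s t) (hN : N.dimVec = d) :
        ∃ U, N.IsSubrep U ∧ 0 < QRep.pair θ (N.subDim U) := by
      by_contra! h
      exact not_semistable N hN ⟨hN ▸ orthogonal, h⟩
    obtain ⟨e, pos, generic⟩ := exists_genericSub_mul (P := fun e => 0 < QRep.pair θ e) destabilized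
    obtain ⟨U, invariant, subDim_eq⟩ := (generic m).2 M hM
    have nonpos := semistable.2 U invariant
    rw [subDim_eq, QRep.pair_mul] at nonpos
    exact nonpos.not_gt (mul_pos hm' pos)

/-- for every positive integer `m`, `Cone(d) = Cone(m·d)`. -/
theorem stmt6 (k : Type) [Field k] [IsAlgClosed k] [CharZero k]
    {Q0 Q1 : Type} [Fintype Q0] [Fintype Q1] (s t : Q1 → Q0) (d : Q0 → ℕ)
    (m : ℕ) (hm : 0 < m) :
    SstCone k s t d = SstCone k s t (fun i => m * d i) :=
  stmt6_general k s t d m hm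
end
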